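/- Let n ≥ 1, let f₂ be a (positive or negative) definite real quadratic form in x₁,…,x_{n+1} and f₃ a real homogeneous cubic in x₁,…,x_{n+1}, and let X₀ = {x₀·f₂ + f₃ = 0} ⊂ P^{n+1} with p = [1:0:⋯:0]. Then the central projection [x₀ : x] ↦ [x] is a well-defined homeomorphism from X₀(ℝ) ∖ {p} onto ℝPⁿ. -/

import Mathlib

/-!
On a line through the node `p`, the cubic `x₀ · f₂ + f₃` is linear in `x₀` with leading coefficient
`f₂(x) ≠ 0`, so each such line meets the cubic in exactly one point besides `p`. Explicitly,
the inverse of the projection `[x₀ : x] ↦ [x]` is `[x] ↦ [-f₃(x) / f₂(x) : x]`, which is well defined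
because `f₃ / f₂` is homogeneous of degree one. Continuity of both maps is checked on nonzero vectors,
through the quotient map to projective space; for the projection (`continuousOn_centralProj`) this uses
that the complement of `p` is open, so that the quotient map restricts to a quotient map over it.
-/

open MvPolynomial

/-- The cubic form `F = x₀ · f₂(x₁,…,x_{n+1}) + f₃(x₁,…,x_{n+1})` in the variables
`x₀, …, x_{n+1}`, where `f₂` and `f₃` are polynomials in the variables `x₁, …, x_{n+1}`
(renamed into the last `n+1` of the `n+2` variables via `Fin.succ`). -/
noncomputable def nodalCubicForm {K : Type} [CommRing K] {n : ℕ}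
    (f₂ f₃ : MvPolynomial (Fin (n + 1)) K) : MvPolynomial (Fin (n + 2)) K :=
  X 0 * rename Fin.succ f₂ + rename Fin.succ f₃

/-- The vector `(1, 0, …, 0)` representing the node `p = [1:0:⋯:0]` is nonzero. -/
lemma single_zero_one_ne_zero {n : ℕ} : (Pi.single 0 1 : Fin (n + 1) → ℝ) ≠ 0 := by
  intro h
  have h0 := congrFun h (0 : Fin (n + 1))
  rw [Pi.single_eq_same, Pi.zero_apply] at h0
  exact one_ne_zero h0

/-- The quotient topology on the projectivization of a topological vector space. -/
instance projTop (K V : Type) [DivisionRing K] [AddCommGroup V] [Module K V]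
    [TopologicalSpace V] : TopologicalSpace (Projectivization K V) :=
  inferInstanceAs (TopologicalSpace (Quotient (projectivizationSetoid K V)))

lemma eval_smul_of_isHomogeneous {m d : ℕ} {φ : MvPolynomial (Fin m) ℝ} (hφ : φ.IsHomogeneous d)
    (t : ℝ) (v : Fin m → ℝ) : eval (t • v) φ = t ^ d * eval v φ := by
  rw [eval_eq, eval_eq, Finset.mul_sum]
  refine Finset.sum_congr rfl fun u hu => ?_
  have hd : ∑ i ∈ u.support, u i = d := by
    have h := hφ (mem_support_iff.1 hu)
    simpa [Finsupp.weight_apply, Finsupp.sum] using h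
  simp only [Pi.smul_apply, smul_eq_mul, mul_pow, Finset.prod_mul_distrib,
    Finset.prod_pow_eq_pow_sum, hd]
  ring

lemma eval_nodalCubicForm {n : ℕ} (f₂ f₃ : MvPolynomial (Fin (n + 1)) ℝ) (v : Fin (n + 2) → ℝ) :
    eval v (nodalCubicForm f₂ f₃) = v 0 * eval (Fin.tail v) f₂ + eval (Fin.tail v) f₃ := by
  simp only [nodalCubicForm, map_add, map_mul, eval_X, eval_rename]
  rfl

lemma isQuotientMap_mk' (m : ℕ) :
    Topology.IsQuotientMap (Projectivization.mk' ℝ : {v : Fin m → ℝ // v ≠ 0} → _) :=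
  isQuotientMap_quot_mk

/-- The vanishing of the cubic form does not depend on the representative. -/
lemma eval_rep_eq_zero_iff {n : ℕ} {f₂ f₃ : MvPolynomial (Fin (n + 1)) ℝ}
    (hf₂ : f₂.IsHomogeneous 2) (hf₃ : f₃.IsHomogeneous 3) (v : Fin (n + 2) → ℝ) (hv : v ≠ 0) :
    eval (Projectivization.mk ℝ v hv).rep (nodalCubicForm f₂ f₃) = 0 ↔
      v 0 * eval (Fin.tail v) f₂ + eval (Fin.tail v) f₃ = 0 := by
  obtain ⟨a, ha⟩ := Projectivization.exists_smul_eq_mk_rep ℝ v hv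
  have ht : Fin.tail (a • v) = (a : ℝ) • Fin.tail v := rfl
  have h0 : (a • v) 0 = (a : ℝ) * v 0 := rfl
  rw [← ha, eval_nodalCubicForm, ht, h0, eval_smul_of_isHomogeneous hf₂,
    eval_smul_of_isHomogeneous hf₃]
  have h : (a : ℝ) * v 0 * ((a : ℝ) ^ 2 * eval (Fin.tail v) f₂) + (a : ℝ) ^ 3 * eval (Fin.tail v) f₃
      = (a : ℝ) ^ 3 * (v 0 * eval (Fin.tail v) f₂ + eval (Fin.tail v) f₃) := by ring
  rw [h, mul_eq_zero, or_iff_right (pow_ne_zero 3 a.ne_zero)]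

lemma mk_eq_node_iff {n : ℕ} (v : Fin (n + 2) → ℝ) (hv : v ≠ 0) :
    Projectivization.mk ℝ v hv =
      Projectivization.mk ℝ (Pi.single 0 1 : Fin (n + 2) → ℝ) single_zero_one_ne_zero ↔
    Fin.tail v = 0 := by
  rw [Projectivization.mk_eq_mk_iff']
  constructor
  · rintro ⟨a, rfl⟩
    funext i
    simp [Fin.tail]
  · intro h
    refine ⟨v 0, funext fun i => ?_⟩
    refine Fin.cases (by simp) (fun j => ?_) i
    have hj : v j.succ = 0 := congrFun h j
    simp [hj]

/-- The central projection `[x₀ : x] ↦ [x]`, extended to the node `p` by the arbitrary value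
`[1 : ⋯ : 1]`. -/
noncomputable def centralProj {n : ℕ} (q : Projectivization ℝ (Fin (n + 2) → ℝ)) :
    Projectivization ℝ (Fin (n + 1) → ℝ) :=
  open Classical in
  if h : Fin.tail q.rep ≠ 0 then Projectivization.mk ℝ (Fin.tail q.rep) h
  else Projectivization.mk ℝ 1 one_ne_zero

lemma centralProj_mk {n : ℕ} (v : Fin (n + 2) → ℝ) (hv : v ≠ 0) (ht : Fin.tail v ≠ 0) :
    centralProj (Projectivization.mk ℝ v hv) = Projectivization.mk ℝ (Fin.tail v) ht := by
  obtain ⟨a, ha⟩ := Projectivization.exists_smul_eq_mk_rep ℝ v hv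
  have hs : Fin.tail (Projectivization.mk ℝ v hv).rep = a • Fin.tail v := by rw [← ha]; rfl
  have hne : Fin.tail (Projectivization.mk ℝ v hv).rep ≠ 0 := by
    rw [hs]; exact (smul_ne_zero_iff_ne a).2 ht
  rw [centralProj, dif_pos hne, Projectivization.mk_eq_mk_iff]
  exact ⟨a, hs.symm⟩

lemma continuousOn_centralProj {n : ℕ} :
    ContinuousOn (centralProj (n := n))
      {Projectivization.mk ℝ (Pi.single 0 1 : Fin (n + 2) → ℝ) single_zero_one_ne_zero}ᶜ := by
  have htail : Continuous (fun v : {v : Fin (n + 2) → ℝ // v ≠ 0} => Fin.tail v.1) :=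
    continuous_pi fun i => (continuous_apply i.succ).comp continuous_subtype_val
  have hpre : Projectivization.mk' ℝ ⁻¹'
      {Projectivization.mk ℝ (Pi.single 0 1 : Fin (n + 2) → ℝ) single_zero_one_ne_zero}ᶜ =
      {v : {v : Fin (n + 2) → ℝ // v ≠ 0} | Fin.tail v.1 ≠ 0} := by
    ext v
    exact not_congr (mk_eq_node_iff v.1 v.2)
  have hopen : IsOpen
      ({Projectivization.mk ℝ (Pi.single 0 1 : Fin (n + 2) → ℝ) single_zero_one_ne_zero}ᶜ :
        Set (Projectivization ℝ (Fin (n + 2) → ℝ))) := by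
    rw [← (isQuotientMap_mk' (n + 2)).isOpen_preimage, hpre]
    exact isOpen_ne_fun htail continuous_const
  rw [(isQuotientMap_mk' (n + 2)).continuousOn_isOpen_iff hopen, hpre,
    continuousOn_iff_continuous_domRestrict]
  have hcont : Continuous fun w : {v : {v : Fin (n + 2) → ℝ // v ≠ 0} | Fin.tail v.1 ≠ 0} =>
      Projectivization.mk' ℝ (⟨Fin.tail w.1.1, w.2⟩ : {v : Fin (n + 1) → ℝ // v ≠ 0}) :=
    (isQuotientMap_mk' (n + 1)).continuous.comp
      ((htail.comp continuous_subtype_val).subtype_mk _)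
  convert! hcont using 1
  funext w
  exact centralProj_mk w.1.1 w.1.2 w.2

lemma cons_ne_zero_of_ne_zero {n : ℕ} (x₀ : ℝ) {x : Fin (n + 1) → ℝ} (hx : x ≠ 0) :
    (Fin.cons x₀ x : Fin (n + 2) → ℝ) ≠ 0 := fun h => hx (funext fun i => congrFun h i.succ)

/-- The inverse of the central projection: `[x] ↦ [-f₃(x) / f₂(x) : x]`. -/
noncomputable def cubicSection {n : ℕ} (f₂ f₃ : MvPolynomial (Fin (n + 1)) ℝ)
    (hf₂ : f₂.IsHomogeneous 2) (hf₃ : f₃.IsHomogeneous 3) :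
    Projectivization ℝ (Fin (n + 1) → ℝ) → Projectivization ℝ (Fin (n + 2) → ℝ) :=
  Projectivization.lift
    (fun x => Projectivization.mk ℝ (Fin.cons (-eval x.1 f₃ / eval x.1 f₂) x.1)
      (cons_ne_zero_of_ne_zero _ x.2)) (by
    rintro ⟨a, ha⟩ ⟨b, hb⟩ t h
    obtain rfl : a = t • b := h
    have ht : t ≠ 0 := by rintro rfl; exact ha (zero_smul _ _)
    rw [Projectivization.mk_eq_mk_iff']
    refine ⟨t, funext fun i => ?_⟩
    refine Fin.cases ?_ (fun j => rfl) i
    simp only [Pi.smul_apply, Fin.cons_zero, smul_eq_mul, eval_smul_of_isHomogeneous hf₂,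
      eval_smul_of_isHomogeneous hf₃]
    -- If `f₂(b) = 0`, both quotients are zero by convention.
    by_cases h2 : eval b f₂ = 0
    · simp [h2]
    · field_simp)

lemma continuous_cubicSection {n : ℕ} (f₂ f₃ : MvPolynomial (Fin (n + 1)) ℝ)
    (hf₂ : f₂.IsHomogeneous 2) (hf₃ : f₃.IsHomogeneous 3)
    (hdef : ∀ v : Fin (n + 1) → ℝ, v ≠ 0 → eval v f₂ ≠ 0) :
    Continuous (cubicSection f₂ f₃ hf₂ hf₃) := by
  rw [(isQuotientMap_mk' (n + 1)).continuous_iff]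
  have hc : Continuous fun x : {v : Fin (n + 1) → ℝ // v ≠ 0} =>
      (Fin.cons (-eval x.1 f₃ / eval x.1 f₂) x.1 : Fin (n + 2) → ℝ) := by
    refine continuous_pi fun i => ?_
    refine Fin.cases ?_ (fun j => ?_) i
    · simp only [Fin.cons_zero]
      exact ((MvPolynomial.continuous_eval f₃).comp continuous_subtype_val).neg.div
        ((MvPolynomial.continuous_eval f₂).comp continuous_subtype_val) fun x => hdef x.1 x.2
    · simp only [Fin.cons_succ]
      exact (continuous_apply j).comp continuous_subtype_val
  exact (isQuotientMap_mk' (n + 2)).continuous.comp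
    (hc.subtype_mk fun x => cons_ne_zero_of_ne_zero _ x.2)

/-- If `f₂` is a definite real quadratic form (no nonzero real zeros) and `f₃` a real
cubic form in `x₁,…,x_{n+1}`, then for the cubic `X₀ = {x₀·f₂ + f₃ = 0} ⊂ P^{n+1}` with
`p = [1:0:⋯:0]`, the central projection `[x₀ : x] ↦ [x]` is a well-defined homeomorphism
from `X₀(ℝ) ∖ {p}` onto `ℝPⁿ`. -/
theorem nodal_cubic_complement_homeo_proj_space (n : ℕ) (hn : 1 ≤ n)
    (f₂ f₃ : MvPolynomial (Fin (n + 1)) ℝ)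
    (hf₂ : f₂.IsHomogeneous 2) (hf₃ : f₃.IsHomogeneous 3)
    (hdef : ∀ v : Fin (n + 1) → ℝ, v ≠ 0 → eval v f₂ ≠ 0) :
    ∃ h : ↥({x : Projectivization ℝ (Fin (n + 2) → ℝ) |
            eval x.rep (nodalCubicForm f₂ f₃) = 0} \
          {Projectivization.mk ℝ ((Pi.single 0 1 : Fin (n + 2) → ℝ)) single_zero_one_ne_zero}) ≃ₜ
        Projectivization ℝ (Fin (n + 1) → ℝ),
      ∀ (x₀ : ℝ) (x : Fin (n + 1) → ℝ) (hx : x ≠ 0) (hc : (Fin.cons x₀ x : Fin (n + 2) → ℝ) ≠ 0)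
        (hm : Projectivization.mk ℝ (Fin.cons x₀ x : Fin (n + 2) → ℝ) hc ∈
          ({x : Projectivization ℝ (Fin (n + 2) → ℝ) |
              eval x.rep (nodalCubicForm f₂ f₃) = 0} \
            {Projectivization.mk ℝ ((Pi.single 0 1 : Fin (n + 2) → ℝ)) single_zero_one_ne_zero})),
        h ⟨Projectivization.mk ℝ (Fin.cons x₀ x : Fin (n + 2) → ℝ) hc, hm⟩ = Projectivization.mk ℝ x hx := by
  refine ⟨{ toFun := fun q => centralProj q.1
            invFun := fun y => ⟨cubicSection f₂ f₃ hf₂ hf₃ y, ?_⟩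
            left_inv := ?_
            right_inv := ?_
            continuous_toFun := ?_
            continuous_invFun := ?_ }, ?_⟩
  · induction y using Projectivization.ind with | h x hx => ?_
    refine ⟨(eval_rep_eq_zero_iff hf₂ hf₃ _ (cons_ne_zero_of_ne_zero _ hx)).2 ?_,
      fun h => hx ((mk_eq_node_iff _ (cons_ne_zero_of_ne_zero _ hx)).1 h)⟩
    have h2 := hdef x hx
    simp only [Fin.cons_zero, Fin.tail_cons]
    field_simp
    ring
  · rintro ⟨q, hq⟩
    induction q using Projectivization.ind with | h v hv => ?_
    have ht : Fin.tail v ≠ 0 := fun h => hq.2 ((mk_eq_node_iff v hv).2 h)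
    have hF := (eval_rep_eq_zero_iff hf₂ hf₃ v hv).1 hq.1
    have h2 := hdef _ ht
    -- The equation of the cubic determines `x₀` from the remaining coordinates.
    have h0 : -eval (Fin.tail v) f₃ / eval (Fin.tail v) f₂ = v 0 := by
      rw [div_eq_iff h2]
      linarith
    refine Subtype.ext ?_
    simp only [centralProj_mk v hv ht, cubicSection, Projectivization.lift_mk, h0,
      Fin.cons_self_tail]
  · intro y
    induction y using Projectivization.ind with | h x hx => ?_
    exact centralProj_mk _ (cons_ne_zero_of_ne_zero _ hx) hx
  · exact continuousOn_centralProj.comp_continuous continuous_subtype_val fun q => q.2.2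
  · exact (continuous_cubicSection f₂ f₃ hf₂ hf₃ hdef).subtype_mk _
  · intro x₀ x hx hc hm
    exact centralProj_mk _ hc hx
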